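/- For u ∈ C²(S Ω̄), where Ω ⊂ ℝ² is a smooth bounded domain with unit sphere bundle SΩ = Ω × S¹, the Pestov identity holds: ‖VXu‖²_{L²(SΩ)} = ‖XVu‖²_{L²(SΩ)} + ‖Xu‖²_{L²(SΩ)} + ⟨∇_T u, Vu⟩_{L²(∂SΩ)}, where X u(x, v_θ) = v_θ · ∇_x u(x, v_θ), V u(x, v_θ) = ∂_θ u(x, v_θ) with v_θ = (cos θ, sin θ), and ∇_T = ⟨ν^⊥, ∇_x⟩ is the tangential derivative along ∂Ω. -/

import Mathlib

open MeasureTheory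

/-- The geodesic vector field `X` on the unit sphere bundle `Ω × S¹`:
`Xu(x, v_θ) = v_θ · ∇_x u(x, v_θ)`. -/
noncomputable def Xop (u : ℝ × ℝ → ℝ → ℝ) (x : ℝ × ℝ) (θ : ℝ) : ℝ :=
  Real.cos θ * fderiv ℝ (fun y => u y θ) x (1, 0) +
    Real.sin θ * fderiv ℝ (fun y => u y θ) x (0, 1)

/-- The vertical vector field `V`: `Vu(x, v_θ) = ∂_θ u(x, v_θ)`. -/
noncomputable def Vop (u : ℝ × ℝ → ℝ → ℝ) (x : ℝ × ℝ) (θ : ℝ) : ℝ :=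
  deriv (u x) θ

/-! Since `[X, V] = X_⊥` and `[X_⊥, V] = -X`, expanding `(VXu)² = (XVu - X_⊥u)²` gives, pointwise,
`(VXu)² = (XVu)² + (Xu)² + (X_⊥Vu · Xu - XVu · X_⊥u) - V(X_⊥u · Xu)`. The last term integrates to
zero over the circle by periodicity. The bracket does not depend on the frame `X, X_⊥`: it is the
scalar exterior derivative of the 1-form `Vu d_x u`, so Green's theorem turns its integral over `Ω`
into `∫ Vu ∇_T u` over the boundary. Green's theorem itself follows, by a partition of unity, from
the case of a rectangle and charts straightening the boundary. -/

open Set Filter Topology Function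

section PartialDerivatives

variable {E F G : Type*} [NormedAddCommGroup E] [NormedSpace ℝ E] [NormedAddCommGroup F]
  [NormedSpace ℝ F] [NormedAddCommGroup G] [NormedSpace ℝ G] {m n : WithTop ℕ∞}

theorem contDiff_left_of_uncurry {u : E → G → F} (hu : ContDiff ℝ n (uncurry u)) (y : G) :
    ContDiff ℝ n fun x => u x y :=
  hu.comp (contDiff_id.prodMk contDiff_const)

theorem contDiff_right_of_uncurry {u : E → G → F} (hu : ContDiff ℝ n (uncurry u)) (x : E) :
    ContDiff ℝ n (u x) :=
  hu.comp (contDiff_const.prodMk contDiff_id)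

theorem contDiff_fderiv_left {u : E → G → F} (hu : ContDiff ℝ n (uncurry u)) (hmn : m + 1 ≤ n) :
    ContDiff ℝ m (uncurry fun x y => fderiv ℝ (fun x' => u x' y) x) :=
  ContDiff.fderiv (f := fun (q : E × G) x => u x q.2)
    (hu.comp (contDiff_snd.prodMk (contDiff_snd.comp contDiff_fst))) contDiff_fst hmn

theorem contDiff_deriv_right {u : E → ℝ → F} (hu : ContDiff ℝ n (uncurry u)) (hmn : m + 1 ≤ n) :
    ContDiff ℝ m (uncurry fun x θ => deriv (u x) θ) :=
  (ContDiff.fderiv (f := fun (q : E × ℝ) θ => u q.1 θ)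
    (hu.comp ((contDiff_fst.comp contDiff_fst).prodMk contDiff_snd)) contDiff_snd
    hmn).clm_apply contDiff_const

theorem hasDerivAt_fderiv_left {u : E → ℝ → F} (hu : ContDiff ℝ 2 (uncurry u)) (x : E)
    (θ : ℝ) :
    HasDerivAt (fun φ => fderiv ℝ (fun y => u y φ) x) (fderiv ℝ (fun y => deriv (u y) θ) x) θ := by
  have hu₁ : Differentiable ℝ (uncurry u) := hu.differentiable two_ne_zero
  have hu₂ : Differentiable ℝ (fderiv ℝ (uncurry u)) :=
    (hu.fderiv_right (m := 1) (by norm_num)).differentiable one_ne_zero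
  have hleft (φ : ℝ) : fderiv ℝ (fun y => u y φ) x =
      (fderiv ℝ (uncurry u) (x, φ)).comp (.inl ℝ E ℝ) :=
    ((hu₁ (x, φ)).hasFDerivAt.comp (f := fun y => (y, φ)) x (hasFDerivAt_prodMk_left x φ)).fderiv
  have hright (y : E) : deriv (u y) θ = fderiv ℝ (uncurry u) (y, θ) (0, 1) :=
    ((hu₁ (y, θ)).hasFDerivAt.comp_hasDerivAt θ
      ((hasDerivAt_const θ y).prodMk (hasDerivAt_id θ))).deriv
  have hmixed : fderiv ℝ (fun y => deriv (u y) θ) x =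
      (fderiv ℝ (fderiv ℝ (uncurry u)) (x, θ) (0, 1)).comp (.inl ℝ E ℝ) := by
    ext v
    have hsymm := hu.contDiffAt.isSymmSndFDerivAt (x := (x, θ)) (by simp) (v, 0) (0, 1)
    have hderiv := ((hu₂ (x, θ)).hasFDerivAt.comp (f := fun y => (y, θ)) x
      (hasFDerivAt_prodMk_left x θ)).clm_apply (hasFDerivAt_const ((0, 1) : E × ℝ) x)
    rw [funext hright, show fderiv ℝ (fun y => fderiv ℝ (uncurry u) (y, θ) (0, 1)) x = _ from
      hderiv.fderiv]
    simpa using hsymm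
  have hvert : HasDerivAt (fun φ => fderiv ℝ (uncurry u) (x, φ))
      (fderiv ℝ (fderiv ℝ (uncurry u)) (x, θ) (0, 1)) θ :=
    (hu₂ (x, θ)).hasFDerivAt.comp_hasDerivAt θ
      ((hasDerivAt_const θ x).prodMk (hasDerivAt_id θ))
  rw [funext hleft, hmixed]
  simpa using hvert.clm_comp (hasDerivAt_const θ (ContinuousLinearMap.inl ℝ E ℝ))

end PartialDerivatives

section Forms

variable {F : Type*} [NormedAddCommGroup F] [NormedSpace ℝ F]
  {ω : ℝ × ℝ → ℝ × ℝ →L[ℝ] F} {Φ : ℝ × ℝ → ℝ × ℝ} {x : ℝ × ℝ}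

/-- The scalar exterior derivative `∂₁ω₂ - ∂₂ω₁` of the 1-form `ω = ω₁ dx₁ + ω₂ dx₂` on the
plane, with `ω` encoded as a map into the dual space. -/
noncomputable def curl (ω : ℝ × ℝ → ℝ × ℝ →L[ℝ] F) (x : ℝ × ℝ) : F :=
  fderiv ℝ ω x (1, 0) (0, 1) - fderiv ℝ ω x (0, 1) (1, 0)

/-- The pullback `Φ^*ω` of the 1-form `ω` under the map `Φ`. -/
noncomputable def pullbackForm (Φ : ℝ × ℝ → ℝ × ℝ) (ω : ℝ × ℝ → ℝ × ℝ →L[ℝ] F) (z : ℝ × ℝ) :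
    ℝ × ℝ →L[ℝ] F :=
  (ω (Φ z)).comp (fderiv ℝ Φ z)

theorem curl_of_notMem_tsupport (hx : x ∉ tsupport ω) : curl ω x = 0 := by
  simp [curl, fderiv_of_notMem_tsupport ℝ hx]

theorem curl_finsetSum {ι : Type*} {s : Finset ι} {ω : ι → ℝ × ℝ → ℝ × ℝ →L[ℝ] F}
    (hω : ∀ i ∈ s, DifferentiableAt ℝ (ω i) x) :
    curl (fun y => ∑ i ∈ s, ω i y) x = ∑ i ∈ s, curl (ω i) x := by
  simp [curl, fderiv_fun_sum hω]

theorem continuous_curl_uncurry {ω : ℝ × ℝ → ℝ → ℝ × ℝ →L[ℝ] F} (hω : ContDiff ℝ 1 (uncurry ω)) :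
    Continuous fun q : (ℝ × ℝ) × ℝ => curl (fun y => ω y q.2) q.1 := by
  have : Continuous fun q : (ℝ × ℝ) × ℝ => fderiv ℝ (fun y => ω y q.2) q.1 :=
    (contDiff_fderiv_left (m := 0) hω (by norm_num)).continuous
  unfold curl
  fun_prop

theorem continuous_curl (hω : ContDiff ℝ 1 ω) : Continuous (curl ω) := by
  have := hω.continuous_fderiv one_ne_zero
  unfold curl
  fun_prop

theorem curl_smul_fderiv {w : ℝ × ℝ → ℝ} {u : ℝ × ℝ → F} (hw : DifferentiableAt ℝ w x)
    (hu : ContDiffAt ℝ 2 u x) :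
    curl (fun y => w y • fderiv ℝ u y) x =
      fderiv ℝ w x (1, 0) • fderiv ℝ u x (0, 1) - fderiv ℝ w x (0, 1) • fderiv ℝ u x (1, 0) := by
  have hu' : DifferentiableAt ℝ (fderiv ℝ u) x :=
    (hu.fderiv_right (m := 1) (by norm_num)).differentiableAt one_ne_zero
  have hsymm : fderiv ℝ (fderiv ℝ u) x (1, 0) (0, 1) = fderiv ℝ (fderiv ℝ u) x (0, 1) (1, 0) :=
    hu.isSymmSndFDerivAt (by simp) _ _
  simp [curl, fderiv_fun_smul hw hu', hsymm]

theorem det_eq_of_prod (A : ℝ × ℝ →L[ℝ] ℝ × ℝ) :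
    A.det = (A (1, 0)).1 * (A (0, 1)).2 - (A (1, 0)).2 * (A (0, 1)).1 := by
  rw [ContinuousLinearMap.det, ← LinearMap.det_toMatrix (Module.Basis.finTwoProd ℝ),
    Matrix.det_fin_two]
  simp [LinearMap.toMatrix_apply, mul_comm]

theorem bilin_sub_swap (B : ℝ × ℝ →L[ℝ] ℝ × ℝ →L[ℝ] F) (p q : ℝ × ℝ) :
    B p q - B q p = (p.1 * q.2 - p.2 * q.1) • (B (1, 0) (0, 1) - B (0, 1) (1, 0)) := by
  have hcoord (r : ℝ × ℝ) : r.1 • ((1, 0) : ℝ × ℝ) + r.2 • ((0, 1) : ℝ × ℝ) = r := by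
    ext <;> simp
  conv_lhs => rw [← hcoord p, ← hcoord q]
  simp only [map_add, map_smul, add_apply, smul_apply]
  module

theorem contDiff_pullbackForm (hω : ContDiff ℝ 1 ω) (hΦ : ContDiff ℝ 2 Φ) :
    ContDiff ℝ 1 (pullbackForm Φ ω) :=
  (hω.comp (hΦ.of_le one_le_two)).clm_comp (hΦ.fderiv_right (by norm_num))

theorem curl_pullbackForm (hω : DifferentiableAt ℝ ω (Φ x)) (hΦ : ContDiffAt ℝ 2 Φ x) :
    curl (pullbackForm Φ ω) x = (fderiv ℝ Φ x).det • curl ω (Φ x) := by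
  have hΦ₁ : DifferentiableAt ℝ Φ x := hΦ.differentiableAt two_ne_zero
  have hΦ₂ : DifferentiableAt ℝ (fderiv ℝ Φ) x :=
    (hΦ.fderiv_right (m := 1) (by norm_num)).differentiableAt one_ne_zero
  have hsymm : fderiv ℝ (fderiv ℝ Φ) x (1, 0) (0, 1) = fderiv ℝ (fderiv ℝ Φ) x (0, 1) (1, 0) :=
    hΦ.isSymmSndFDerivAt (by simp) _ _
  have hderiv (v v' : ℝ × ℝ) : fderiv ℝ (pullbackForm Φ ω) x v v' =
      fderiv ℝ ω (Φ x) (fderiv ℝ Φ x v) (fderiv ℝ Φ x v') +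
        ω (Φ x) (fderiv ℝ (fderiv ℝ Φ) x v v') := by
    have := (hω.hasFDerivAt.comp x hΦ₁.hasFDerivAt).clm_comp hΦ₂.hasFDerivAt
    rw [show fderiv ℝ (pullbackForm Φ ω) x = _ from this.fderiv]
    simp [add_comm]
  rw [curl, hderiv, hderiv, hsymm, add_sub_add_right_eq_sub, bilin_sub_swap, ← det_eq_of_prod,
    curl]

theorem integral_curl_Icc (hω : ContDiff ℝ 1 ω) {a b : ℝ × ℝ} (hab : a ≤ b) :
    ∫ x in Icc a b, curl ω x =
      (∫ s in a.1..b.1, ω (s, a.2) (1, 0)) + (∫ s in a.2..b.2, ω (b.1, s) (0, 1)) -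
        (∫ s in a.1..b.1, ω (s, b.2) (1, 0)) - ∫ s in a.2..b.2, ω (a.1, s) (0, 1) := by
  have hderiv (v x : ℝ × ℝ) :
      HasFDerivAt (fun y => ω y v) ((fderiv ℝ ω x).flip v) x := by
    simpa using (hω.differentiable one_ne_zero x).hasFDerivAt.clm_apply (hasFDerivAt_const v x)
  have hcont (v : ℝ × ℝ) : Continuous fun y => ω y v := hω.continuous.clm_apply continuous_const
  have hdiv := integral_divergence_prod_Icc_of_hasFDerivAt_of_le
    (fun y => ω y (0, 1)) (fun y => -ω y (1, 0)) (fun y => (fderiv ℝ ω y).flip (0, 1))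
    (fun y => -(fderiv ℝ ω y).flip (1, 0)) a b hab (hcont _).continuousOn (hcont _).neg.continuousOn
    (fun y _ => hderiv _ y) (fun y _ => (hderiv _ y).neg)
    ((continuous_curl hω).congr (fun y => by simp [curl, sub_eq_add_neg])
      |>.continuousOn.integrableOn_compact isCompact_Icc)
  simp only [neg_apply, ContinuousLinearMap.flip_apply, ← sub_eq_add_neg,
    intervalIntegral.integral_neg] at hdiv
  simp only [curl, hdiv]
  abel

theorem integral_fderiv_apply_eq_zero_of_hasCompactSupport {E : Type*} [NormedAddCommGroup E]
    [NormedSpace ℝ E] [FiniteDimensional ℝ E] [MeasurableSpace E] [BorelSpace E] (μ : Measure E)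
    [μ.IsAddHaarMeasure] {f : E → F} (hf : ContDiff ℝ 1 f) (hsupp : HasCompactSupport f) (v : E) :
    ∫ x, fderiv ℝ f x v ∂μ = 0 := by
  have hint : Integrable (fun x => fderiv ℝ f x v) μ :=
    ((hf.continuous_fderiv one_ne_zero).clm_apply continuous_const).integrable_of_hasCompactSupport
      (hsupp.fderiv_apply (𝕜 := ℝ) v)
  simpa using integral_smul_fderiv_eq_neg_fderiv_smul_of_integrable (μ := μ)
    (f := fun _ => (1 : ℝ)) (g := f) (v := v) (by simp) (by simpa using hint)
    (by simpa using hf.continuous.integrable_of_hasCompactSupport hsupp) (by fun_prop)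
    (fun x _ => hf.differentiable one_ne_zero x)

theorem integral_curl_eq_zero_of_hasCompactSupport (hω : ContDiff ℝ 1 ω)
    (hsupp : HasCompactSupport ω) : ∫ x, curl ω x = 0 := by
  have hω' (v : ℝ × ℝ) : ContDiff ℝ 1 fun x => ω x v := hω.clm_apply contDiff_const
  have hsupp' (v : ℝ × ℝ) : HasCompactSupport fun x => ω x v :=
    hsupp.mono fun x hx hωx => hx (by simp [hωx])
  have hderiv (v v' x : ℝ × ℝ) : fderiv ℝ ω x v v' = fderiv ℝ (fun y => ω y v') x v := by
    simp [fderiv_clm_apply (hω.differentiable one_ne_zero x) (differentiableAt_const v')]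
  have hint (v v' : ℝ × ℝ) : Integrable fun x => fderiv ℝ (fun y => ω y v') x v :=
    (((hω' v').continuous_fderiv one_ne_zero).clm_apply
      continuous_const).integrable_of_hasCompactSupport ((hsupp' v').fderiv_apply (𝕜 := ℝ) v)
  simp only [curl, hderiv]
  rw [integral_sub (hint _ _) (hint _ _),
    integral_fderiv_apply_eq_zero_of_hasCompactSupport _ (hω' _) (hsupp' _),
    integral_fderiv_apply_eq_zero_of_hasCompactSupport _ (hω' _) (hsupp' _), sub_zero]

end Forms

section BoundaryCurve

theorem injOn_Ico_of_periodic {α : Type*} {f : ℝ → α} {L : ℝ} (hL : 0 < L) (hf : Periodic f L)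
    (hinj : InjOn f (Ico 0 L)) (a : ℝ) : InjOn f (Ico a (a + L)) := by
  intro s hs t ht hst
  have hmod (r : ℝ) : f (toIcoMod hL 0 r) = f r := hf.sub_zsmul_eq _
  have hmem (r : ℝ) : toIcoMod hL 0 r ∈ Ico 0 L := by simpa using toIcoMod_mem_Ico hL 0 r
  have h₀ : toIcoMod hL 0 s = toIcoMod hL 0 t :=
    hinj (hmem s) (hmem t) (by rw [hmod, hmod, hst])
  rw [← (toIcoMod_eq_self hL).2 hs, ← (toIcoMod_eq_self hL).2 ht]
  exact (toIcoMod_eq_toIcoMod hL).2 ((toIcoMod_eq_toIcoMod hL).1 h₀)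

theorem eventually_mem_range_imp_mem_image_ball {X : Type*} [TopologicalSpace X] [T2Space X]
    {f : ℝ → X} {L : ℝ} (hL : 0 < L) (hcont : Continuous f) (hf : Periodic f L)
    (hinj : InjOn f (Ico 0 L)) (t₀ : ℝ) {a : ℝ} (ha : 0 < a) :
    ∀ᶠ p in 𝓝 (f t₀), p ∈ range f → p ∈ f '' Metric.ball t₀ a := by
  set K := f '' Icc (t₀ + a) (t₀ + L - a)
  have hK : IsClosed K := (isCompact_Icc.image hcont).isClosed
  have ht₀ : f t₀ ∉ K := by
    rintro ⟨t, ht, htt₀⟩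
    have : t = t₀ := injOn_Ico_of_periodic hL hf hinj t₀
      ⟨by linarith [ht.1], by linarith [ht.2]⟩ ⟨le_rfl, by linarith⟩ htt₀
    linarith [ht.1]
  filter_upwards [hK.isOpen_compl.mem_nhds ht₀]
  rintro _ hp ⟨t, rfl⟩
  obtain ⟨s, hs, hts⟩ := hf.exists_mem_Ico hL t t₀
  rw [hts] at hp ⊢
  rw [Real.ball_eq_Ioo]
  by_cases hsa : s < t₀ + a
  · exact ⟨s, ⟨by linarith [hs.1], hsa⟩, rfl⟩
  · have hsL : t₀ + L - a < s := by
      by_contra! hsL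
      exact hp ⟨s, ⟨not_lt.1 hsa, hsL⟩, rfl⟩
    exact ⟨s - L, ⟨by linarith, by linarith [hs.2]⟩, hf.sub_eq s⟩

theorem subset_of_disjoint_frontier {X : Type*} [TopologicalSpace X] {S A : Set X}
    (hS : IsPreconnected S) (hdisj : Disjoint S (frontier A)) (hne : (S ∩ A).Nonempty) :
    S ⊆ A := by
  have hcover : S ⊆ interior A ∪ interior Aᶜ := by
    simpa only [compl_frontier_eq_union_interior] using hdisj.subset_compl_right
  obtain ⟨x, hxS, hxA⟩ := hne
  have hx : x ∈ interior A := (hcover hxS).resolve_right fun h => interior_subset h hxA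
  exact (hS.subset_left_of_subset_union isOpen_interior isOpen_interior
    (disjoint_compl_right.mono interior_subset interior_subset) hcover ⟨x, hxS, hx⟩).trans
    interior_subset

theorem mem_iff_snd_neg_of_frontier_iff {X : Type*} [TopologicalSpace X] {Ω : Set X}
    (hΩ : IsOpen Ω) {Φ : ℝ × ℝ → X} {t₀ c : ℝ} (hc : 0 < c) (hΦ : Continuous Φ)
    (hfrontier : ∀ z ∈ Metric.ball (t₀, 0) c, Φ z ∈ frontier Ω ↔ z.2 = 0)
    (hnhds : Φ '' Metric.ball (t₀, 0) c ∈ 𝓝 (Φ (t₀, 0)))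
    (hout : ∃ z ∈ Metric.ball (t₀, (0 : ℝ)) c, 0 < z.2 ∧ Φ z ∉ Ω) :
    ∀ z ∈ Metric.ball (t₀, 0) c, Φ z ∈ Ω ↔ z.2 < 0 := by
  set B := Metric.ball (t₀, (0 : ℝ)) c
  -- An open half of the square is connected and its image misses the frontier, so the image lies
  -- either inside or outside `Ω`.
  have hside {H : Set (ℝ × ℝ)} (hH : Convex ℝ H) (hH₀ : ∀ z ∈ H, z.2 ≠ 0)
      (hne : ∃ z ∈ B ∩ H, Φ z ∈ Ω) {z : ℝ × ℝ} (hz : z ∈ B ∩ H) : Φ z ∈ Ω := by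
    refine subset_of_disjoint_frontier (((convex_ball _ _).inter hH).isPreconnected.image Φ
      hΦ.continuousOn) (disjoint_left.2 ?_) ?_ (mem_image_of_mem Φ hz)
    · rintro _ ⟨y, hy, rfl⟩ hfr
      exact hH₀ y hy.2 ((hfrontier y hy.1).1 hfr)
    · obtain ⟨y, hy, hyΩ⟩ := hne
      exact ⟨Φ y, mem_image_of_mem Φ hy, hyΩ⟩
  have hupper : ∀ z ∈ B, 0 < z.2 → Φ z ∉ Ω := by
    intro z hz hz₀ hzΩ
    obtain ⟨y, hy, hy₀, hyΩ⟩ := hout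
    exact hyΩ (hside (convex_halfSpace_gt ⟨Prod.snd_add, Prod.smul_snd⟩ 0)
      (fun w hw => ne_of_gt hw) ⟨z, ⟨hz, hz₀⟩, hzΩ⟩ ⟨hy, hy₀⟩)
  have hneg : ∀ z ∈ B, Φ z ∈ Ω → z.2 < 0 := by
    intro z hz hzΩ
    refine (not_lt.1 fun h => hupper z hz h hzΩ).lt_of_ne fun h => ?_
    exact disjoint_left.1 (disjoint_frontier_iff_isOpen.2 hΩ) ((hfrontier z hz).2 h) hzΩ
  refine fun z hz => ⟨hneg z hz, fun hz₀ => ?_⟩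
  have hclosure : Φ (t₀, 0) ∈ closure Ω :=
    frontier_subset_closure ((hfrontier _ (Metric.mem_ball_self hc)).2 rfl)
  obtain ⟨_, ⟨y, hy, rfl⟩, hyΩ⟩ := mem_closure_iff_nhds.1 hclosure _ hnhds
  exact hside (convex_halfSpace_lt ⟨Prod.snd_add, Prod.smul_snd⟩ 0) (fun w hw => ne_of_lt hw)
    ⟨y, ⟨hy, hneg y hy hyΩ⟩, hyΩ⟩ ⟨hz, hz₀⟩

/-- The normal `(σ₂', -σ₁')` of the plane curve `σ`, pointing to its right and not normalised. -/
noncomputable def rightNormal (σ : ℝ → ℝ × ℝ) (t : ℝ) : ℝ × ℝ :=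
  ((deriv σ t).2, -(deriv σ t).1)

/-- `σ` is a regular `C²` parametrisation, injective modulo its period `L`, of the whole boundary
of `Ω`. That `Ω` lies to the left of `σ` is expressed by `outer`: short segments along the right
normal leave `closure Ω`. -/
structure IsBoundaryCurve (Ω : Set (ℝ × ℝ)) (L : ℝ) (σ : ℝ → ℝ × ℝ) : Prop where
  pos : 0 < L
  contDiff : ContDiff ℝ 2 σ
  periodic : Periodic σ L
  injOn : InjOn σ (Ico 0 L)
  deriv_ne_zero : ∀ t, deriv σ t ≠ 0
  frontier_eq : frontier Ω = range σ
  outer : ∀ t, ∃ ε > 0, ∀ h ∈ Ioo (0 : ℝ) ε, σ t + h • rightNormal σ t ∉ closure Ω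

/-- A `C²` chart `Φ` straightening the boundary of `Ω` near `σ t₀`: on the square of half-side `c`
about `(t₀, 0)` it carries the lower half into `Ω` and the axis onto the boundary, where it agrees
with `σ`. The determinant is negative since `Ω` lies to the left of `σ`. -/
structure IsBoundaryChart (Ω : Set (ℝ × ℝ)) (σ : ℝ → ℝ × ℝ) (t₀ c : ℝ) (Φ : ℝ × ℝ → ℝ × ℝ) :
    Prop where
  pos : 0 < c
  contDiff : ContDiff ℝ 2 Φ
  map_axis : ∀ t, Φ (t, 0) = σ t
  injOn : InjOn Φ (Metric.ball (t₀, 0) c)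
  det_neg : ∀ z ∈ Metric.ball (t₀, 0) c, (fderiv ℝ Φ z).det < 0
  mem_iff : ∀ z ∈ Metric.ball (t₀, 0) c, Φ z ∈ Ω ↔ z.2 < 0
  mem_frontier_iff : ∀ z ∈ Metric.ball (t₀, 0) c, Φ z ∈ frontier Ω ↔ z.2 = 0

/-- The map `(t, s) ↦ σ t + s n`, where `n` is the right normal of `σ` at the fixed parameter `t₀`.
Freezing `n` keeps the map as smooth as `σ`. -/
noncomputable def normalChart (σ : ℝ → ℝ × ℝ) (t₀ : ℝ) (z : ℝ × ℝ) : ℝ × ℝ :=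
  σ z.1 + z.2 • rightNormal σ t₀

theorem normalChart_axis (σ : ℝ → ℝ × ℝ) (t₀ t : ℝ) : normalChart σ t₀ (t, 0) = σ t := by
  simp [normalChart]

theorem det_fderiv_normalChart_neg {σ : ℝ → ℝ × ℝ} {t₀ : ℝ} (hσ : deriv σ t₀ ≠ 0) :
    (fderiv ℝ (normalChart σ t₀) (t₀, 0)).det < 0 := by
  have hderiv : HasFDerivAt (normalChart σ t₀) _ (t₀, 0) :=
    ((differentiableAt_of_deriv_ne_zero hσ).hasDerivAt.hasFDerivAt.comp (t₀, (0 : ℝ))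
      hasFDerivAt_fst).add (hasFDerivAt_snd.smul_const (rightNormal σ t₀))
  have hdet : (fderiv ℝ (normalChart σ t₀) (t₀, 0)).det =
      -((deriv σ t₀).1 ^ 2 + (deriv σ t₀).2 ^ 2) := by
    rw [hderiv.fderiv, det_eq_of_prod]
    simp only [rightNormal, add_apply, ContinuousLinearMap.comp_apply,
      ContinuousLinearMap.coe_fst', ContinuousLinearMap.coe_snd',
      ContinuousLinearMap.smulRight_apply, ContinuousLinearMap.toSpanSingleton_apply,
      Prod.fst_add, Prod.snd_add, Prod.smul_fst, Prod.smul_snd, smul_eq_mul]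
    ring
  rw [hdet, neg_lt_zero]
  by_contra! h
  refine hσ (Prod.ext ?_ ?_) <;> simp only [Prod.fst_zero, Prod.snd_zero] <;> nlinarith

section InverseFunction

variable {E : Type*} [NormedAddCommGroup E] [NormedSpace ℝ E] [FiniteDimensional ℝ E] {Φ : E → E}
  {x : E}

theorem hasStrictFDerivAt_equiv_of_det_ne_zero (hΦ : ContDiffAt ℝ 1 Φ x)
    (hdet : (fderiv ℝ Φ x).det ≠ 0) :
    HasStrictFDerivAt Φ ((fderiv ℝ Φ x).toContinuousLinearEquivOfDetNeZero hdet : E →L[ℝ] E) x := by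
  simpa using hΦ.hasStrictFDerivAt one_ne_zero

theorem image_mem_nhds_of_det_ne_zero {s : Set E} (hΦ : ContDiffAt ℝ 1 Φ x)
    (hdet : (fderiv ℝ Φ x).det ≠ 0) (hs : s ∈ 𝓝 x) : Φ '' s ∈ 𝓝 (Φ x) := by
  rw [← (hasStrictFDerivAt_equiv_of_det_ne_zero hΦ hdet).map_nhds_eq_of_equiv]
  exact image_mem_map hs

theorem exists_mem_nhds_injOn_of_det_ne_zero (hΦ : ContDiffAt ℝ 1 Φ x)
    (hdet : (fderiv ℝ Φ x).det ≠ 0) : ∃ s ∈ 𝓝 x, InjOn Φ s :=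
  ⟨_, (hasStrictFDerivAt_equiv_of_det_ne_zero hΦ hdet).eventually_left_inverse,
    LeftInvOn.injOn fun _ hy => hy⟩

end InverseFunction

namespace IsBoundaryCurve

variable {Ω : Set (ℝ × ℝ)} {L : ℝ} {σ : ℝ → ℝ × ℝ}

theorem contDiff_normalChart (hσ : IsBoundaryCurve Ω L σ) (t₀ : ℝ) :
    ContDiff ℝ 2 (normalChart σ t₀) :=
  (hσ.contDiff.comp contDiff_fst).add (contDiff_snd.smul contDiff_const)

theorem exists_injOn_ball_normalChart (hσ : IsBoundaryCurve Ω L σ) (t₀ : ℝ) :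
    ∃ r > 0, InjOn (normalChart σ t₀) (Metric.ball (t₀, 0) r) := by
  obtain ⟨s, hs, hinj⟩ := exists_mem_nhds_injOn_of_det_ne_zero
    ((hσ.contDiff_normalChart t₀).of_le one_le_two).contDiffAt
    (det_fderiv_normalChart_neg (hσ.deriv_ne_zero t₀)).ne
  obtain ⟨r, hr, hrs⟩ := Metric.mem_nhds_iff.1 hs
  exact ⟨r, hr, hinj.mono hrs⟩

theorem eventually_normalChart_mem_frontier_iff (hσ : IsBoundaryCurve Ω L σ) (t₀ : ℝ) :
    ∀ᶠ z in 𝓝 (t₀, 0), normalChart σ t₀ z ∈ frontier Ω ↔ z.2 = 0 := by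
  obtain ⟨r, hr, hinj⟩ := hσ.exists_injOn_ball_normalChart t₀
  have hlim : Tendsto (normalChart σ t₀) (𝓝 (t₀, 0)) (𝓝 (σ t₀)) :=
    (hσ.contDiff_normalChart t₀).continuous.tendsto' _ _ (normalChart_axis σ t₀ t₀)
  have hnear := hlim.eventually (eventually_mem_range_imp_mem_image_ball hσ.pos
    hσ.contDiff.continuous hσ.periodic hσ.injOn t₀ hr)
  filter_upwards [hnear, Metric.ball_mem_nhds _ hr] with z hz hzr
  rw [hσ.frontier_eq]
  constructor
  · intro hzσ
    obtain ⟨t, ht, htz⟩ := hz hzσ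
    have ht' : (t, (0 : ℝ)) ∈ Metric.ball (t₀, 0) r := by
      simpa [← ball_prod_same, hr] using ht
    rw [← normalChart_axis σ t₀] at htz
    exact congrArg Prod.snd (hinj hzr ht' htz.symm)
  · intro hz₀
    exact ⟨z.1, by rw [← normalChart_axis σ t₀, ← hz₀]⟩

theorem exists_isBoundaryChart (hσ : IsBoundaryCurve Ω L σ) (hΩ : IsOpen Ω) (t₀ : ℝ) :
    ∃ c Φ, IsBoundaryChart Ω σ t₀ c Φ := by
  have hΦ := hσ.contDiff_normalChart t₀
  have hdet := det_fderiv_normalChart_neg (hσ.deriv_ne_zero t₀)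
  have hdet' : ∀ᶠ z in 𝓝 (t₀, 0), (fderiv ℝ (normalChart σ t₀) z).det < 0 :=
    (ContinuousLinearMap.continuous_det.comp
      (hΦ.continuous_fderiv two_ne_zero)).tendsto _ |>.eventually_lt_const hdet
  obtain ⟨r, hr, hinj⟩ := hσ.exists_injOn_ball_normalChart t₀
  obtain ⟨c, hc, hcball⟩ := Metric.eventually_nhds_iff_ball.1
    ((hdet'.and (Metric.ball_mem_nhds _ hr)).and (hσ.eventually_normalChart_mem_frontier_iff t₀))
  refine ⟨c, _, hc, hΦ, normalChart_axis σ t₀, hinj.mono fun z hz => (hcball z hz).1.2,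
    fun z hz => (hcball z hz).1.1, ?_, fun z hz => (hcball z hz).2⟩
  refine mem_iff_snd_neg_of_frontier_iff hΩ hc hΦ.continuous (fun z hz => (hcball z hz).2)
    (image_mem_nhds_of_det_ne_zero (hΦ.of_le one_le_two).contDiffAt hdet.ne
      (Metric.ball_mem_nhds _ hc)) ?_
  obtain ⟨ε, hε, hout⟩ := hσ.outer t₀
  obtain ⟨h, hh, hhεc⟩ := exists_between (lt_min hε hc)
  rw [lt_min_iff] at hhεc
  exact ⟨(t₀, h), by simp [← ball_prod_same, hc, abs_of_pos hh, hhεc.2], hh,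
    fun hmem => hout h ⟨hh, hhεc.1⟩ (subset_closure hmem)⟩

end IsBoundaryCurve

end BoundaryCurve

section Green

variable {F : Type*} [NormedAddCommGroup F] [NormedSpace ℝ F]
  {Ω : Set (ℝ × ℝ)} {L : ℝ} {σ : ℝ → ℝ × ℝ} {t₀ c d : ℝ} {Φ : ℝ × ℝ → ℝ × ℝ}
  {ω : ℝ × ℝ → ℝ × ℝ →L[ℝ] F}

theorem intervalIntegral_eq_of_periodic_of_eqOn_zero {g : ℝ → F} {a b : ℝ} (hg : Continuous g)
    (hper : Periodic g L) (hb : b ≤ a + L) (hzero : EqOn g 0 (Ioc b (a + L))) :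
    ∫ t in 0..L, g t = ∫ t in a..b, g t := by
  have htail : ∫ t in b..(a + L), g t = 0 := by
    rw [intervalIntegral.integral_of_le hb]
    exact setIntegral_eq_zero_of_forall_eq_zero hzero
  have hshift : ∫ t in 0..L, g t = ∫ t in a..(a + L), g t := by
    simpa using hper.intervalIntegral_add_eq 0 a
  rw [hshift, ← intervalIntegral.integral_add_adjacent_intervals (hg.intervalIntegrable a b)
    (hg.intervalIntegrable b (a + L)), htail, add_zero]

theorem periodic_deriv {f : ℝ → F} (hf : Periodic f L) : Periodic (deriv f) L := fun t => by
  rw [← deriv_comp_add_const, show (fun s => f (s + L)) = f from funext hf]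

namespace IsBoundaryCurve

theorem continuous_deriv (hσ : IsBoundaryCurve Ω L σ) : Continuous (deriv σ) :=
  hσ.contDiff.continuous_deriv one_le_two

theorem mem_frontier (hσ : IsBoundaryCurve Ω L σ) (t : ℝ) : σ t ∈ frontier Ω :=
  hσ.frontier_eq ▸ mem_range_self t

theorem notMem (hσ : IsBoundaryCurve Ω L σ) (hΩ : IsOpen Ω) (t : ℝ) : σ t ∉ Ω :=
  disjoint_left.1 (disjoint_frontier_iff_isOpen.2 hΩ) (hσ.mem_frontier t)

end IsBoundaryCurve

namespace IsBoundaryChart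

theorem two_mul_le (hΦ : IsBoundaryChart Ω σ t₀ c Φ) (hσ : IsBoundaryCurve Ω L σ) :
    2 * c ≤ L := by
  by_contra! hcL
  have hmem (t : ℝ) (ht : |t - t₀| = L / 2) : (t, (0 : ℝ)) ∈ Metric.ball (t₀, 0) c := by
    simp only [Metric.mem_ball, Prod.dist_eq, Real.dist_eq, ht, sub_self, abs_zero]
    exact max_lt (by linarith) hΦ.pos
  have habs : |L / 2| = L / 2 := abs_of_pos (half_pos hσ.pos)
  have heq : Φ (t₀ + L / 2, 0) = Φ (t₀ - L / 2, 0) := by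
    rw [hΦ.map_axis, hΦ.map_axis, ← hσ.periodic (t₀ - L / 2)]
    ring_nf
  have := congrArg Prod.fst <| hΦ.injOn (hmem _ (by simpa using habs))
    (hmem _ (by simpa [abs_neg] using habs)) heq
  simp only at this
  linarith [hσ.pos]

theorem apply_eq_zero (hΦ : IsBoundaryChart Ω σ t₀ c Φ) (hdc : d ≤ c)
    (hsupp : tsupport ω ⊆ Φ '' Metric.ball (t₀, 0) d) {z : ℝ × ℝ}
    (hz : z ∈ Metric.ball (t₀, 0) c) (hzd : z ∉ Metric.ball (t₀, 0) d) : ω (Φ z) = 0 := by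
  refine image_eq_zero_of_notMem_tsupport fun hmem => hzd ?_
  obtain ⟨y, hy, hyz⟩ := hsupp hmem
  exact hΦ.injOn (Metric.ball_subset_ball hdc hy) hz hyz ▸ hy

theorem setIntegral_curl (hΦ : IsBoundaryChart Ω σ t₀ c Φ) (hΩ : IsOpen Ω) (hdc : d ≤ c)
    (hω : ContDiff ℝ 1 ω) (hsupp : tsupport ω ⊆ Φ '' Metric.ball (t₀, 0) d) :
    ∫ x in Ω, curl ω x = -∫ z in Icc (t₀ - d, -d) (t₀ + d, 0), curl (pullbackForm Φ ω) z := by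
  set Q : Set (ℝ × ℝ) := Ioo (t₀ - d) (t₀ + d) ×ˢ Ioo (-d) 0
  have hball : Metric.ball (t₀, 0) d ⊆ Metric.ball (t₀, (0 : ℝ)) c := Metric.ball_subset_ball hdc
  have hQ : Q = Metric.ball (t₀, 0) d ∩ {z | z.2 < 0} := by
    ext z
    simp only [Q, ← ball_prod_same, Real.ball_eq_Ioo, mem_prod, mem_Ioo, mem_inter_iff,
      mem_ofPred_eq]
    grind
  have hQmeas : MeasurableSet Q := measurableSet_Ioo.prod measurableSet_Ioo
  have hQc : Q ⊆ Metric.ball (t₀, 0) c := hQ ▸ inter_subset_left.trans hball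
  have hQΩ : Φ '' Q ⊆ Ω := by
    rintro _ ⟨z, hz, rfl⟩
    exact (hΦ.mem_iff z (hQc hz)).2 (hQ ▸ hz).2
  have hcurl : ∀ x ∈ Ω \ Φ '' Q, curl ω x = 0 := by
    rintro x ⟨hxΩ, hxQ⟩
    refine curl_of_notMem_tsupport fun hx => hxQ ?_
    obtain ⟨z, hz, rfl⟩ := hsupp hx
    exact ⟨z, hQ ▸ ⟨hz, (hΦ.mem_iff z (hball hz)).1 hxΩ⟩, rfl⟩
  have hdiff : Differentiable ℝ Φ := hΦ.contDiff.differentiable two_ne_zero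
  calc ∫ x in Ω, curl ω x
      = ∫ x in Φ '' Q, curl ω x :=
        setIntegral_eq_of_subset_of_forall_sdiff_eq_zero hΩ.measurableSet hQΩ hcurl
    _ = ∫ z in Q, |(fderiv ℝ Φ z).det| • curl ω (Φ z) :=
        integral_image_eq_integral_abs_det_fderiv_smul volume hQmeas
          (fun z _ => (hdiff z).hasFDerivAt.hasFDerivWithinAt) (hΦ.injOn.mono hQc) _
    _ = ∫ z in Q, -curl (pullbackForm Φ ω) z := by
        refine setIntegral_congr_fun hQmeas fun z hz => ?_
        simp only [curl_pullbackForm (hω.differentiable one_ne_zero _) hΦ.contDiff.contDiffAt,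
          abs_of_neg (hΦ.det_neg z (hQc hz)), neg_smul]
    _ = -∫ z in Icc (t₀ - d, -d) (t₀ + d, 0), curl (pullbackForm Φ ω) z := by
        rw [integral_neg, ← Icc_prod_Icc]
        exact congrArg _ (setIntegral_congr_set
          (Measure.set_prod_ae_eq Ioo_ae_eq_Icc Ioo_ae_eq_Icc))

theorem integral_curl_pullbackForm (hΦ : IsBoundaryChart Ω σ t₀ c Φ) (hd : 0 < d) (hdc : d < c)
    (hω : ContDiff ℝ 1 ω) (hsupp : tsupport ω ⊆ Φ '' Metric.ball (t₀, 0) d) :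
    ∫ z in Icc (t₀ - d, -d) (t₀ + d, 0), curl (pullbackForm Φ ω) z =
      -∫ t in (t₀ - d)..(t₀ + d), ω (σ t) (deriv σ t) := by
  have hside {z : ℝ × ℝ} (hz : max |z.1 - t₀| |z.2| = d) (v : ℝ × ℝ) :
      pullbackForm Φ ω z v = 0 := by
    have hdist : dist z (t₀, 0) = d := by simpa [Prod.dist_eq, Real.dist_eq] using hz
    simp [pullbackForm, hΦ.apply_eq_zero hdc.le hsupp (hdist.trans_lt hdc) hdist.not_lt]
  have hbottom : ∫ t in (t₀ - d)..(t₀ + d), pullbackForm Φ ω (t, -d) (1, 0) = 0 := by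
    refine intervalIntegral.integral_zero_ae (.of_forall fun t ht => hside ?_ _)
    grind
  have hleft : ∫ s in (-d)..0, pullbackForm Φ ω (t₀ - d, s) (0, 1) = 0 := by
    refine intervalIntegral.integral_zero_ae (.of_forall fun s hs => hside ?_ _)
    grind
  have hright : ∫ s in (-d)..0, pullbackForm Φ ω (t₀ + d, s) (0, 1) = 0 := by
    refine intervalIntegral.integral_zero_ae (.of_forall fun s hs => hside ?_ _)
    grind
  have htop (t : ℝ) : pullbackForm Φ ω (t, 0) (1, 0) = ω (σ t) (deriv σ t) := by
    have hcomp : HasDerivAt (fun s => Φ (s, 0)) (fderiv ℝ Φ (t, 0) (1, 0)) t :=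
      (hΦ.contDiff.differentiable two_ne_zero (t, 0)).hasFDerivAt.comp_hasDerivAt t
        ((hasDerivAt_id t).prodMk (hasDerivAt_const t 0))
    simp only [hΦ.map_axis] at hcomp
    simp [pullbackForm, hΦ.map_axis, hcomp.deriv]
  rw [integral_curl_Icc (contDiff_pullbackForm hω hΦ.contDiff)
    (Prod.mk_le_mk.2 ⟨by linarith, by linarith⟩)]
  simp [hbottom, hleft, hright, htop]

theorem integral_curl (hΦ : IsBoundaryChart Ω σ t₀ c Φ) (hσ : IsBoundaryCurve Ω L σ)
    (hΩ : IsOpen Ω) (hd : 0 < d) (hdc : d < c) (hω : ContDiff ℝ 1 ω)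
    (hsupp : tsupport ω ⊆ Φ '' Metric.ball (t₀, 0) d) :
    ∫ x in Ω, curl ω x = ∫ t in 0..L, ω (σ t) (deriv σ t) := by
  have hcont : Continuous fun t => ω (σ t) (deriv σ t) :=
    (hω.continuous.comp hσ.contDiff.continuous).clm_apply hσ.continuous_deriv
  have hper : Periodic (fun t => ω (σ t) (deriv σ t)) L := fun t => by
    simp only [hσ.periodic t, periodic_deriv hσ.periodic t]
  have hzero : EqOn (fun t => ω (σ t) (deriv σ t)) 0 (Ioc (t₀ + d) (t₀ - d + L)) := by
    intro t ht
    have : ω (σ t) = 0 := by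
      refine image_eq_zero_of_notMem_tsupport fun hmem => ?_
      obtain ⟨z, hz, hzt⟩ := hsupp hmem
      have hz₂ : z.2 = 0 := (hΦ.mem_frontier_iff z (Metric.ball_subset_ball hdc.le hz)).1
        (hzt ▸ hσ.mem_frontier t)
      have hσz : σ t = σ z.1 := by rw [← hΦ.map_axis z.1, ← hz₂, hzt]
      rw [← ball_prod_same, Real.ball_eq_Ioo] at hz
      have := injOn_Ico_of_periodic hσ.pos hσ.periodic hσ.injOn z.1
        ⟨by linarith [hz.1.2, ht.1], by linarith [hz.1.1, ht.2]⟩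
        (left_mem_Ico.2 (by linarith [hσ.pos])) hσz
      linarith [hz.1.2, ht.1]
    simp [this]
  rw [hΦ.setIntegral_curl hΩ hdc.le hω hsupp, hΦ.integral_curl_pullbackForm hd hdc hω hsupp,
    neg_neg, intervalIntegral_eq_of_periodic_of_eqOn_zero hcont hper
      (by linarith [hΦ.two_mul_le hσ]) hzero]

theorem image_ball_mem_nhds (hΦ : IsBoundaryChart Ω σ t₀ c Φ) (hd : 0 < d) :
    Φ '' Metric.ball (t₀, 0) d ∈ 𝓝 (σ t₀) := by
  rw [← hΦ.map_axis]
  exact image_mem_nhds_of_det_ne_zero (hΦ.contDiff.of_le one_le_two).contDiffAt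
    (hΦ.det_neg _ (Metric.mem_ball_self hΦ.pos)).ne (Metric.ball_mem_nhds _ hd)

end IsBoundaryChart

theorem exists_finset_contDiff_partition {E : Type*} [NormedAddCommGroup E] [NormedSpace ℝ E]
    [FiniteDimensional ℝ E] {K : Set E} (hK : IsCompact K) {U : E → Set E}
    (hU : ∀ p ∈ K, U p ∈ 𝓝 p) (n : ℕ∞) :
    ∃ (s : Finset E) (f : s → E → ℝ), (∀ i : s, (i : E) ∈ K ∧ ContDiff ℝ n (f i) ∧
      tsupport (f i) ⊆ U i) ∧ ∀ x ∈ K, ∑ i, f i x = 1 := by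
  obtain ⟨s, hsK, hcover⟩ := hK.elim_nhds_subcover (fun p => interior (U p))
    fun p hp => interior_mem_nhds.2 (hU p hp)
  obtain ⟨f, hf⟩ := SmoothPartitionOfUnity.exists_isSubordinate (modelWithCornersSelf ℝ E)
    hK.isClosed (fun i : s => interior (U i)) (fun _ => isOpen_interior)
    (hcover.trans_eq (iUnion_subtype (· ∈ s) fun i => interior (U i)).symm)
  refine ⟨s, fun i => f i, fun i => ⟨hsK i i.2,
    (f i).contMDiff.contDiff.of_le (by exact_mod_cast le_top), (hf i).trans interior_subset⟩,
    fun x hx => ?_⟩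
  rw [← finsum_eq_sum_of_fintype, f.sum_eq_one hx]

theorem integrableOn_of_continuous_of_isBounded {E : Type*} [MetricSpace E] [ProperSpace E]
    [MeasurableSpace E] [OpensMeasurableSpace E] {μ : Measure E} [IsFiniteMeasureOnCompacts μ]
    {G : Type*} [NormedAddCommGroup G] {s : Set E} {f : E → G} (hf : Continuous f)
    (hs : Bornology.IsBounded s) : IntegrableOn f s μ :=
  (hf.continuousOn.integrableOn_compact hs.isCompact_closure).mono_set subset_closure

namespace IsBoundaryCurve

theorem integral_curl_of_tsupport_subset (hσ : IsBoundaryCurve Ω L σ) (hΩ : IsOpen Ω)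
    (hbdd : Bornology.IsBounded Ω) (hω : ContDiff ℝ 1 ω) (hsupp : tsupport ω ⊆ Ω) :
    ∫ x in Ω, curl ω x = ∫ t in 0..L, ω (σ t) (deriv σ t) := by
  have hcompact : HasCompactSupport ω :=
    Metric.isCompact_of_isClosed_isBounded (isClosed_tsupport ω) (hbdd.subset hsupp)
  have hσ₀ (t : ℝ) : ω (σ t) = 0 :=
    image_eq_zero_of_notMem_tsupport fun h => hσ.notMem hΩ t (hsupp h)
  rw [setIntegral_eq_integral_of_forall_compl_eq_zero
      fun x hx => curl_of_notMem_tsupport fun h => hx (hsupp h),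
    integral_curl_eq_zero_of_hasCompactSupport hω hcompact]
  simp [hσ₀]

variable (F) in
theorem exists_mem_nhds_integral_curl (hσ : IsBoundaryCurve Ω L σ) (hΩ : IsOpen Ω)
    (hbdd : Bornology.IsBounded Ω) {p : ℝ × ℝ} (hp : p ∈ closure Ω) :
    ∃ U ∈ 𝓝 p, ∀ ω : ℝ × ℝ → ℝ × ℝ →L[ℝ] F, ContDiff ℝ 1 ω → tsupport ω ⊆ U →
      ∫ x in Ω, curl ω x = ∫ t in 0..L, ω (σ t) (deriv σ t) := by
  rw [closure_eq_self_union_frontier, hσ.frontier_eq] at hp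
  rcases hp with hpΩ | ⟨t₀, rfl⟩
  · exact ⟨Ω, hΩ.mem_nhds hpΩ, fun ω => hσ.integral_curl_of_tsupport_subset hΩ hbdd⟩
  · obtain ⟨c, Φ, hΦ⟩ := hσ.exists_isBoundaryChart hΩ t₀
    exact ⟨_, hΦ.image_ball_mem_nhds (half_pos hΦ.pos),
      fun ω => hΦ.integral_curl hσ hΩ (half_pos hΦ.pos) (half_lt_self hΦ.pos)⟩

theorem integral_curl (hσ : IsBoundaryCurve Ω L σ) (hΩ : IsOpen Ω) (hbdd : Bornology.IsBounded Ω)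
    (hω : ContDiff ℝ 1 ω) : ∫ x in Ω, curl ω x = ∫ t in 0..L, ω (σ t) (deriv σ t) := by
  choose! U hU hlocal using fun p (hp : p ∈ closure Ω) =>
    hσ.exists_mem_nhds_integral_curl F hΩ hbdd hp
  obtain ⟨s, f, hf, hsum⟩ := exists_finset_contDiff_partition hbdd.isCompact_closure hU 1
  have hfω (i : s) : ContDiff ℝ 1 fun x => f i x • ω x := (hf i).2.1.smul hω
  have hsum_smul {x : ℝ × ℝ} (hx : x ∈ closure Ω) : ω x = ∑ i, f i x • ω x := by
    rw [← Finset.sum_smul, hsum x hx, one_smul]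
  have hcurl {x : ℝ × ℝ} (hx : x ∈ Ω) : curl ω x = ∑ i, curl (fun y => f i y • ω y) x := by
    have heq : ω =ᶠ[𝓝 x] fun y => ∑ i, f i y • ω y := by
      filter_upwards [hΩ.mem_nhds hx] with y hy using hsum_smul (subset_closure hy)
    rw [← curl_finsetSum fun i _ => (hfω i).differentiable one_ne_zero x, curl, heq.fderiv_eq,
      ← curl]
  have hboundary (t : ℝ) : ω (σ t) (deriv σ t) = ∑ i, (f i (σ t) • ω (σ t)) (deriv σ t) := by
    conv_lhs => rw [hsum_smul (frontier_subset_closure (hσ.mem_frontier t))]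
    exact sum_apply _ _ _
  calc ∫ x in Ω, curl ω x
      = ∑ i, ∫ x in Ω, curl (fun y => f i y • ω y) x := by
        rw [← integral_finsetSum _ fun i _ =>
          integrableOn_of_continuous_of_isBounded (continuous_curl (hfω i)) hbdd]
        exact setIntegral_congr_fun hΩ.measurableSet fun x hx => hcurl hx
    _ = ∑ i, ∫ t in 0..L, (f i (σ t) • ω (σ t)) (deriv σ t) :=
        Finset.sum_congr rfl fun i _ => hlocal i (hf i).1 _ (hfω i)
          ((tsupport_smul_subset_left _ _).trans (hf i).2.2)
    _ = ∫ t in 0..L, ω (σ t) (deriv σ t) := by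
        have hint (i : s) : IntervalIntegrable
            (fun t => (f i (σ t) • ω (σ t)) (deriv σ t)) volume 0 L :=
          (((hfω i).continuous.comp hσ.contDiff.continuous).clm_apply
            hσ.continuous_deriv).intervalIntegrable _ _
        rw [← intervalIntegral.integral_finsetSum fun i _ => hint i]
        simp only [hboundary]

theorem integral_intervalIntegral_curl {ω : ℝ × ℝ → ℝ → ℝ × ℝ →L[ℝ] F}
    (hσ : IsBoundaryCurve Ω L σ) (hΩ : IsOpen Ω) (hbdd : Bornology.IsBounded Ω)
    (hω : ContDiff ℝ 1 (uncurry ω)) (a b : ℝ) :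
    ∫ x in Ω, ∫ θ in a..b, curl (fun y => ω y θ) x =
      ∫ t in 0..L, ∫ θ in a..b, ω (σ t) θ (deriv σ t) := by
  have hcurl : Continuous (uncurry fun θ x => curl (fun y => ω y θ) x) :=
    (continuous_curl_uncurry hω).comp continuous_swap
  have hedge : Continuous (uncurry fun θ t => ω (σ t) θ (deriv σ t)) :=
    (hω.continuous.comp ((hσ.contDiff.continuous.comp continuous_snd).prodMk
      continuous_fst)).clm_apply (hσ.continuous_deriv.comp continuous_snd)
  calc ∫ x in Ω, ∫ θ in a..b, curl (fun y => ω y θ) x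
      = ∫ θ in a..b, ∫ x in Ω, curl (fun y => ω y θ) x := by
        refine (intervalIntegral_integral_swap ?_).symm
        rw [Measure.prod_restrict]
        exact integrableOn_of_continuous_of_isBounded hcurl
          ((Metric.isBounded_Icc _ _).subset uIoc_subset_uIcc |>.prod hbdd)
    _ = ∫ θ in a..b, ∫ t in 0..L, ω (σ t) θ (deriv σ t) :=
        intervalIntegral.integral_congr fun θ _ => hσ.integral_curl hΩ hbdd
          (contDiff_left_of_uncurry hω θ)
    _ = ∫ t in 0..L, ∫ θ in a..b, ω (σ t) θ (deriv σ t) :=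
        intervalIntegral_intervalIntegral_swap (integrableOn_of_continuous_of_isBounded hedge
          (((Metric.isBounded_Icc _ _).subset uIoc_subset_uIcc).prod
            ((Metric.isBounded_Icc _ _).subset uIoc_subset_uIcc)))

end IsBoundaryCurve

end Green

theorem intervalIntegral_deriv_eq_zero_of_periodic {F : Type*} [NormedAddCommGroup F]
    [NormedSpace ℝ F] [CompleteSpace F] {f : ℝ → F} {T : ℝ} (hf : ContDiff ℝ 1 f)
    (hper : Periodic f T) : ∫ t in 0..T, deriv f t = 0 := by
  rw [intervalIntegral.integral_deriv_eq_sub (fun t _ => hf.differentiable one_ne_zero t)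
    (hf.continuous_deriv_one.intervalIntegrable 0 T), hper.eq, sub_self]

section Pestov

variable {u : ℝ × ℝ → ℝ → ℝ}

/-- The horizontal vector field `X_⊥ = [X, V]`, given by
`X_⊥u(x, v_θ) = sin θ ∂₁u(x, v_θ) - cos θ ∂₂u(x, v_θ)`. -/
noncomputable def Xperp (u : ℝ × ℝ → ℝ → ℝ) (x : ℝ × ℝ) (θ : ℝ) : ℝ :=
  Real.sin θ * fderiv ℝ (fun y => u y θ) x (1, 0) -
    Real.cos θ * fderiv ℝ (fun y => u y θ) x (0, 1)

/-- The 1-form `Vu(·, v_θ) d_x u(·, v_θ)` on the plane. -/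
noncomputable def vertSmulFDeriv (u : ℝ × ℝ → ℝ → ℝ) (x : ℝ × ℝ) (θ : ℝ) : ℝ × ℝ →L[ℝ] ℝ :=
  Vop u x θ • fderiv ℝ (fun y => u y θ) x

section Regularity

variable {m n : WithTop ℕ∞}

theorem contDiff_Vop (hu : ContDiff ℝ n (uncurry u)) (hmn : m + 1 ≤ n) :
    ContDiff ℝ m (uncurry (Vop u)) :=
  contDiff_deriv_right hu hmn

theorem contDiff_Xop (hu : ContDiff ℝ n (uncurry u)) (hmn : m + 1 ≤ n) :
    ContDiff ℝ m (uncurry (Xop u)) := by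
  have hderiv := contDiff_fderiv_left hu hmn
  exact ((Real.contDiff_cos.comp contDiff_snd).mul (hderiv.clm_apply contDiff_const)).add
    ((Real.contDiff_sin.comp contDiff_snd).mul (hderiv.clm_apply contDiff_const))

theorem contDiff_Xperp (hu : ContDiff ℝ n (uncurry u)) (hmn : m + 1 ≤ n) :
    ContDiff ℝ m (uncurry (Xperp u)) := by
  have hderiv := contDiff_fderiv_left hu hmn
  exact ((Real.contDiff_sin.comp contDiff_snd).mul (hderiv.clm_apply contDiff_const)).sub
    ((Real.contDiff_cos.comp contDiff_snd).mul (hderiv.clm_apply contDiff_const))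

theorem contDiff_vertSmulFDeriv (hu : ContDiff ℝ n (uncurry u)) (hmn : m + 1 ≤ n) :
    ContDiff ℝ m (uncurry (vertSmulFDeriv u)) :=
  (contDiff_Vop hu hmn).smul (contDiff_fderiv_left hu hmn)

end Regularity

theorem hasDerivAt_Xop (hu : ContDiff ℝ 2 (uncurry u)) (x : ℝ × ℝ) (θ : ℝ) :
    HasDerivAt (Xop u x) (Xop (Vop u) x θ - Xperp u x θ) θ := by
  have hderiv (v : ℝ × ℝ) := (hasDerivAt_fderiv_left hu x θ).clm_apply (hasDerivAt_const θ v)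
  refine (((Real.hasDerivAt_cos θ).mul (hderiv (1, 0))).add
    ((Real.hasDerivAt_sin θ).mul (hderiv (0, 1)))).congr_deriv ?_
  simp only [Xop, Vop, Xperp, map_zero, add_zero]
  ring

theorem hasDerivAt_Xperp (hu : ContDiff ℝ 2 (uncurry u)) (x : ℝ × ℝ) (θ : ℝ) :
    HasDerivAt (Xperp u x) (Xop u x θ + Xperp (Vop u) x θ) θ := by
  have hderiv (v : ℝ × ℝ) := (hasDerivAt_fderiv_left hu x θ).clm_apply (hasDerivAt_const θ v)
  refine (((Real.hasDerivAt_sin θ).mul (hderiv (1, 0))).sub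
    ((Real.hasDerivAt_cos θ).mul (hderiv (0, 1)))).congr_deriv ?_
  simp only [Xop, Vop, Xperp, map_zero, add_zero]
  ring

theorem curl_vertSmulFDeriv (hu : ContDiff ℝ 2 (uncurry u)) (x : ℝ × ℝ) (θ : ℝ) :
    curl (fun y => vertSmulFDeriv u y θ) x =
      Xperp (Vop u) x θ * Xop u x θ - Xop (Vop u) x θ * Xperp u x θ := by
  have hV : ContDiff ℝ 1 fun y => Vop u y θ :=
    contDiff_left_of_uncurry (contDiff_Vop hu (by norm_num)) θ
  simp only [vertSmulFDeriv]
  rw [curl_smul_fderiv (hV.differentiable one_ne_zero x)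
    (contDiff_left_of_uncurry hu θ).contDiffAt]
  simp only [Xop, Xperp, smul_eq_mul]
  linear_combination (-(fderiv ℝ (fun y => Vop u y θ) x (1, 0) * fderiv ℝ (fun y => u y θ) x (0, 1)
    - fderiv ℝ (fun y => Vop u y θ) x (0, 1) * fderiv ℝ (fun y => u y θ) x (1, 0))) *
    Real.sin_sq_add_cos_sq θ

theorem sq_Vop_Xop (hu : ContDiff ℝ 2 (uncurry u)) (x : ℝ × ℝ) (θ : ℝ) :
    Vop (Xop u) x θ ^ 2 = Xop (Vop u) x θ ^ 2 + Xop u x θ ^ 2 +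
      curl (fun y => vertSmulFDeriv u y θ) x - deriv (fun φ => Xperp u x φ * Xop u x φ) θ := by
  have hX := hasDerivAt_Xop hu x θ
  rw [Vop, hX.deriv, ((hasDerivAt_Xperp hu x θ).fun_mul hX).deriv, curl_vertSmulFDeriv hu]
  ring

theorem continuous_sq_Xop (hu : ContDiff ℝ 1 (uncurry u)) :
    Continuous (uncurry fun x θ => Xop u x θ ^ 2) :=
  (contDiff_Xop (m := 0) hu (by norm_num)).continuous.pow 2

theorem continuous_curl_vertSmulFDeriv (hu : ContDiff ℝ 2 (uncurry u)) :
    Continuous (uncurry fun x θ => curl (fun y => vertSmulFDeriv u y θ) x) :=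
  continuous_curl_uncurry (contDiff_vertSmulFDeriv hu (by norm_num))

theorem intervalIntegral_sq_Vop_Xop (hu : ContDiff ℝ 2 (uncurry u))
    (hper : ∀ x, Periodic (u x) (2 * Real.pi)) (x : ℝ × ℝ) :
    ∫ θ in 0..2 * Real.pi, Vop (Xop u) x θ ^ 2 =
      (∫ θ in 0..2 * Real.pi, Xop (Vop u) x θ ^ 2) + (∫ θ in 0..2 * Real.pi, Xop u x θ ^ 2) +
        ∫ θ in 0..2 * Real.pi, curl (fun y => vertSmulFDeriv u y θ) x := by
  have hprod : ContDiff ℝ 1 fun φ => Xperp u x φ * Xop u x φ :=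
    (contDiff_right_of_uncurry (contDiff_Xperp hu (by norm_num)) x).mul
      (contDiff_right_of_uncurry (contDiff_Xop hu (by norm_num)) x)
  have hprod_per : Periodic (fun φ => Xperp u x φ * Xop u x φ) (2 * Real.pi) := fun φ => by
    simp only [Xperp, Xop, Real.sin_add_two_pi, Real.cos_add_two_pi, hper _ φ]
  have hXV := (continuous_sq_Xop (contDiff_Vop hu (by norm_num))).uncurry_left x
  have hX := (continuous_sq_Xop (hu.of_le one_le_two)).uncurry_left x
  have hcurl := (continuous_curl_vertSmulFDeriv hu).uncurry_left x
  have hint {f : ℝ → ℝ} (hf : Continuous f) : IntervalIntegrable f volume 0 (2 * Real.pi) :=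
    hf.intervalIntegrable _ _
  simp only [sq_Vop_Xop hu]
  rw [intervalIntegral.integral_sub (hint ((hXV.fun_add hX).fun_add hcurl))
      (hint hprod.continuous_deriv_one),
    intervalIntegral_deriv_eq_zero_of_periodic hprod hprod_per, sub_zero,
    intervalIntegral.integral_add (hint (hXV.fun_add hX)) (hint hcurl),
    intervalIntegral.integral_add (hint hXV) (hint hX)]

theorem vertSmulFDeriv_apply_deriv {σ : ℝ → ℝ × ℝ} {t θ : ℝ}
    (hu : DifferentiableAt ℝ (fun y => u y θ) (σ t)) (hσ : DifferentiableAt ℝ σ t) :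
    vertSmulFDeriv u (σ t) θ (deriv σ t) = deriv (fun s => u (σ s) θ) t * Vop u (σ t) θ := by
  have hcomp : deriv (fun s => u (σ s) θ) t = fderiv ℝ (fun y => u y θ) (σ t) (deriv σ t) :=
    fderiv_comp_deriv t hu hσ
  rw [hcomp, mul_comm]
  rfl

end Pestov

theorem stmt15_general {Ω : Set (ℝ × ℝ)} (hΩ : IsOpen Ω) (hbdd : Bornology.IsBounded Ω)
    {L : ℝ} {σ : ℝ → ℝ × ℝ} (hσ : IsBoundaryCurve Ω L σ)
    {u : ℝ × ℝ → ℝ → ℝ} (hu : ContDiff ℝ 2 (uncurry u))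
    (hper : ∀ x, Periodic (u x) (2 * Real.pi)) :
    (∫ x in Ω, ∫ θ in 0..2 * Real.pi, Vop (Xop u) x θ ^ 2) =
      (∫ x in Ω, ∫ θ in 0..2 * Real.pi, Xop (Vop u) x θ ^ 2) +
      (∫ x in Ω, ∫ θ in 0..2 * Real.pi, Xop u x θ ^ 2) +
      ∫ t in 0..L, ∫ θ in 0..2 * Real.pi, deriv (fun s => u (σ s) θ) t * Vop u (σ t) θ := by
  have hXV := continuous_sq_Xop (contDiff_Vop hu (by norm_num))
  have hX := continuous_sq_Xop (hu.of_le one_le_two)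
  have hcurl := continuous_curl_vertSmulFDeriv hu
  have hint {f : ℝ × ℝ → ℝ → ℝ} (hf : Continuous (uncurry f)) :
      IntegrableOn (fun x => ∫ θ in 0..2 * Real.pi, f x θ) Ω :=
    integrableOn_of_continuous_of_isBounded
      (intervalIntegral.continuous_parametric_intervalIntegral_of_continuous' hf _ _) hbdd
  have hboundary (t θ : ℝ) : vertSmulFDeriv u (σ t) θ (deriv σ t) =
      deriv (fun s => u (σ s) θ) t * Vop u (σ t) θ :=
    vertSmulFDeriv_apply_deriv
      ((contDiff_left_of_uncurry hu θ).differentiable two_ne_zero (σ t))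
      (hσ.contDiff.differentiable two_ne_zero t)
  simp only [intervalIntegral_sq_Vop_Xop hu hper, ← hboundary]
  rw [integral_add (Integrable.fun_add (hint hXV) (hint hX)) (hint hcurl),
    integral_add (hint hXV) (hint hX),
    hσ.integral_intervalIntegral_curl hΩ hbdd (contDiff_vertSmulFDeriv hu (by norm_num))]

/-- the Pestov identity on a smooth bounded plane domain `Ω` whose
boundary is parametrized by a smooth, injective, unit-speed closed curve `σ` of period
`L` with outer unit normal `ν(t) = ((σ' t).2, −(σ' t).1)`: for `u ∈ C²(S Ω̄)`,
`‖VXu‖² = ‖XVu‖² + ‖Xu‖² + ⟨∇_T u, Vu⟩_{L²(∂SΩ)}`, where the tangential derivative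
along the boundary is `∇_T u(σ t, θ) = (d/dt) u(σ t, θ)`. -/
theorem stmt15 (Ω : Set (ℝ × ℝ)) (hΩ : IsOpen Ω) (hbdd : Bornology.IsBounded Ω)
    (L : ℝ) (hL : 0 < L) (σ : ℝ → ℝ × ℝ) (hσ : ContDiff ℝ (⊤ : ℕ∞) σ)
    (hσper : ∀ t, σ (t + L) = σ t) (hσinj : Set.InjOn σ (Set.Ico 0 L))
    (hσspeed : ∀ t, (deriv σ t).1 ^ 2 + (deriv σ t).2 ^ 2 = 1)
    (hσrange : frontier Ω = Set.range σ)
    (hσouter : ∀ t : ℝ, ∃ ε > 0, ∀ h ∈ Set.Ioo (0 : ℝ) ε,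
      σ t + h • ((deriv σ t).2, -(deriv σ t).1) ∉ closure Ω)
    (u : ℝ × ℝ → ℝ → ℝ) (hu : ContDiff ℝ 2 (fun q : (ℝ × ℝ) × ℝ => u q.1 q.2))
    (huper : ∀ x θ, u x (θ + 2 * Real.pi) = u x θ) :
    (∫ x in Ω, ∫ θ in (0 : ℝ)..(2 * Real.pi),
        (Vop (fun y φ => Xop u y φ) x θ) ^ 2) =
      (∫ x in Ω, ∫ θ in (0 : ℝ)..(2 * Real.pi),
        (Xop (fun y φ => Vop u y φ) x θ) ^ 2) +
      (∫ x in Ω, ∫ θ in (0 : ℝ)..(2 * Real.pi), (Xop u x θ) ^ 2) +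
      ∫ t in (0 : ℝ)..L, ∫ θ in (0 : ℝ)..(2 * Real.pi),
        (deriv (fun s => u (σ s) θ) t) * Vop u (σ t) θ := by
  have hσ₀ (t : ℝ) : deriv σ t ≠ 0 := fun h => by simpa [h] using hσspeed t
  exact stmt15_general hΩ hbdd
    ⟨hL, contDiff_infty.1 hσ 2, hσper, hσinj, hσ₀, hσrange, hσouter⟩ hu huper
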